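/- Let Γ ⊆ [0,1] be a set of real numbers satisfying the DCC. Then there exist real numbers ε, δ ∈ (0,1] such that for every k ∈ ℕ, every family b₁′, …, b_k′ of real numbers with each b_i′ ∈ [0,1] and each b_i′ lying in the interval [b − ε, b] for some b ∈ Γ, and every family n₁, …, n_k of non-negative integers, if ∑_{i=1}^k n_i·b_i′ − 1 > 0, then ∑_{i=1}^k n_i·b_i′ − 1 ≥ δ. -/

import Mathlib

/-- A set `S ⊆ ℝ` satisfies the descending chain condition (DCC) if every
nonincreasing sequence of elements of `S` is eventually constant. -/
def SatisfiesDCC (S : Set ℝ) : Prop :=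
  ∀ f : ℕ → ℝ, (∀ n, f n ∈ S) → (∀ n, f (n + 1) ≤ f n) → ∃ N, ∀ n ≥ N, f n = f N

/-!
The finite sums of nonnegative elements of a DCC set again form a DCC set, so those exceeding a
threshold `t` are bounded below by some `u > t`. The positive elements of `Γ` are bounded away from
`0`, so, for small `ε`, every positive element of `Γ_ε` approximates an element of `Γ` from below up
to a factor `r > 1` as close to `1` as desired. Unlike an additive error, a factor does not
accumulate with the number of summands: a sum exceeding `t` is at least `u / r`, which stays
above `t` once `r * t < u`.
-/

open Set

theorem SatisfiesDCC.isWF {S : Set ℝ} (hS : SatisfiesDCC S) : S.IsWF := by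
  rw [isWF_iff_no_descending_seq]
  intro f hf hfS
  obtain ⟨N, hN⟩ := hS f hfS fun n => (hf n.lt_succ_self).le
  exact (hf N.lt_succ_self).ne (hN (N + 1) N.le_succ)

theorem exists_gt_forall_le_of_isWF {α : Type*} [LinearOrder α] [NoMaxOrder α] {S : Set α}
    (hS : S.IsWF) (a : α) : ∃ b > a, ∀ x ∈ S, a < x → b ≤ x := by
  rcases (S ∩ Ioi a).eq_empty_or_nonempty with hempty | hne
  · obtain ⟨b, hb⟩ := exists_gt a
    exact ⟨b, hb, fun x hxS hax => (hempty.subset ⟨hxS, hax⟩).elim⟩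
  · have hwf : (S ∩ Ioi a).IsWF := hS.mono inter_subset_left
    exact ⟨hwf.min hne, (hwf.min_mem hne).2, fun x hxS hax => hwf.min_le hne ⟨hxS, hax⟩⟩

theorem exists_mem_Icc_mul_of_mem_closure {R : Type*} [NonUnitalNonAssocSemiring R] [Preorder R]
    [IsOrderedAddMonoid R] {A : Set R} {M : AddSubmonoid R} {r : R}
    (hA : ∀ x ∈ A, ∃ y ∈ M, y ∈ Icc x (r * x)) {x : R} (hx : x ∈ AddSubmonoid.closure A) :
    ∃ y ∈ M, y ∈ Icc x (r * x) := by
  induction hx using AddSubmonoid.closure_induction with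
  | mem x hx => exact hA x hx
  | zero => exact ⟨0, zero_mem M, le_rfl, (mul_zero r).ge⟩
  | add x₁ x₂ _ _ ih₁ ih₂ =>
    obtain ⟨y₁, hy₁, hle₁, hge₁⟩ := ih₁
    obtain ⟨y₂, hy₂, hle₂, hge₂⟩ := ih₂
    exact ⟨y₁ + y₂, add_mem hy₁ hy₂, add_le_add hle₁ hle₂,
      (add_le_add hge₁ hge₂).trans_eq (mul_add r x₁ x₂).symm⟩

theorem sum_natCast_mul_mem_closure {R ι : Type*} [NonAssocSemiring R] {A : Set R} {s : Finset ι}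
    {n : ι → ℕ} {x : ι → R} (hx : ∀ i ∈ s, x i ∈ A) :
    ∑ i ∈ s, (n i : R) * x i ∈ AddSubmonoid.closure A :=
  sum_mem fun i hi => by
    simpa only [nsmul_eq_mul] using nsmul_mem (AddSubmonoid.subset_closure (hx i hi)) (n i)

/-- The set `Γ_ε` of the elements lying at most `ε` below some element of `Γ`. -/
def lowerThickening {G : Type*} [AddGroup G] [Preorder G] (Γ : Set G) (ε : G) : Set G :=
  ⋃ b ∈ Γ, Icc (b - ε) b

section LinearOrderedField

variable {K : Type*} [Field K] [LinearOrder K] [IsStrictOrderedRing K] {Γ : Set K}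

theorem exists_lowerThickening_approx_mul (hΓ : Γ.IsWF) {r : K} (hr : 1 < r) :
    ∃ ε ∈ Ioc (0 : K) 1, ∀ x ∈ lowerThickening Γ ε, 0 < x → ∃ b ∈ Γ, b ∈ Icc x (r * x) := by
  obtain ⟨c, hc, hcΓ⟩ := exists_gt_forall_le_of_isWF hΓ 0
  have hr₀ : 0 < r := one_pos.trans hr
  have hε : 0 < (r - 1) * c / r := div_pos (mul_pos (sub_pos.2 hr) hc) hr₀
  refine ⟨min ((r - 1) * c / r) 1, ⟨lt_min hε one_pos, min_le_right _ _⟩, fun x hx hx₀ => ?_⟩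
  obtain ⟨b, hbΓ, hbx, hxb⟩ := mem_iUnion₂.1 hx
  have hcb : c ≤ b := hcΓ b hbΓ (hx₀.trans_le hxb)
  refine ⟨b, hbΓ, hxb, ?_⟩
  calc b ≤ r * b - (r - 1) * c := by
        linarith [mul_le_mul_of_nonneg_left hcb (sub_pos.2 hr).le]
    _ = r * (b - (r - 1) * c / r) := by field_simp
    _ ≤ r * (b - min ((r - 1) * c / r) 1) := by gcongr; exact min_le_left _ _
    _ ≤ r * x := by gcongr

theorem exists_closure_lowerThickening_approx_mul (hΓ : Γ.IsWF) {r : K} (hr : 1 < r) :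
    ∃ ε ∈ Ioc (0 : K) 1, ∀ x ∈ AddSubmonoid.closure (lowerThickening Γ ε ∩ Ici 0),
      ∃ y ∈ AddSubmonoid.closure (Γ ∩ Ici 0), y ∈ Icc x (r * x) := by
  obtain ⟨ε, hε, happrox⟩ := exists_lowerThickening_approx_mul hΓ hr
  refine ⟨ε, hε, fun x => exists_mem_Icc_mul_of_mem_closure ?_⟩
  rintro x ⟨hxΓ, hx₀ : 0 ≤ x⟩
  rcases hx₀.eq_or_lt with rfl | hpos
  · exact ⟨0, zero_mem _, le_rfl, (mul_zero r).ge⟩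
  · obtain ⟨b, hbΓ, hb⟩ := happrox x hxΓ hpos
    exact ⟨b, AddSubmonoid.subset_closure ⟨hbΓ, hpos.le.trans hb.1⟩, hb⟩

theorem exists_one_lt_mul_lt {t u : K} (htu : t < u) : ∃ r > 1, r * t < u := by
  obtain ⟨η, hη, htη⟩ := exists_pos_mul_lt (sub_pos.2 htu) t
  exact ⟨1 + η, lt_add_of_pos_right 1 hη, by linarith⟩

theorem stmt_3_general (hΓ : Γ.IsWF) (t : K) :
    ∃ ε δ : K, ε ∈ Ioc (0 : K) 1 ∧ δ ∈ Ioc (0 : K) 1 ∧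
      ∀ x ∈ AddSubmonoid.closure (lowerThickening Γ ε ∩ Ici 0), x - t > 0 → x - t ≥ δ := by
  have hwf : (AddSubmonoid.closure (Γ ∩ Ici 0) : Set K).IsWF :=
    ((hΓ.mono inter_subset_left).isPWO.addSubmonoid_closure fun _ hx => hx.2).isWF
  obtain ⟨u, htu, hu⟩ := exists_gt_forall_le_of_isWF hwf t
  obtain ⟨r, hr, hrt⟩ := exists_one_lt_mul_lt htu
  obtain ⟨ε, hε, happrox⟩ := exists_closure_lowerThickening_approx_mul hΓ hr
  have hr₀ : 0 < r := one_pos.trans hr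
  have hδ : 0 < u / r - t := sub_pos.2 ((lt_div_iff₀' hr₀).2 hrt)
  refine ⟨ε, min (u / r - t) 1, hε, ⟨lt_min hδ one_pos, min_le_right _ _⟩, fun x hx hxt => ?_⟩
  obtain ⟨y, hy, hxy, hyx⟩ := happrox x hx
  have huy : u ≤ y := hu y hy ((sub_pos.1 hxt).trans_le hxy)
  have hux : u / r ≤ x := (div_le_iff₀' hr₀).2 (huy.trans hyx)
  exact (min_le_left _ _).trans (sub_le_sub_right hux t)

end LinearOrderedField

/-- Lemma 3.4: if `Γ ⊆ [0,1]` satisfies the DCC, then there exist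
`ε, δ ∈ (0,1]` such that any finite non-negative integer combination
`∑ nᵢ bᵢ'` with each `bᵢ' ∈ Γ_ε ∩ [0,1]` and `∑ nᵢ bᵢ' - 1 > 0`
satisfies `∑ nᵢ bᵢ' - 1 ≥ δ`. -/
theorem stmt_3 (Γ : Set ℝ) (hΓ : Γ ⊆ Set.Icc 0 1) (hDCC : SatisfiesDCC Γ) :
    ∃ ε δ : ℝ, ε ∈ Set.Ioc (0 : ℝ) 1 ∧ δ ∈ Set.Ioc (0 : ℝ) 1 ∧
      ∀ (k : ℕ) (b' : Fin k → ℝ) (m : Fin k → ℕ),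
        (∀ i, b' i ∈ Set.Icc (0 : ℝ) 1) →
        (∀ i, ∃ b ∈ Γ, b' i ∈ Set.Icc (b - ε) b) →
        (∑ i, (m i : ℝ) * b' i) - 1 > 0 →
        (∑ i, (m i : ℝ) * b' i) - 1 ≥ δ := by
  obtain ⟨ε, δ, hε, hδ, hgap⟩ := stmt_3_general hDCC.isWF 1
  exact ⟨ε, δ, hε, hδ, fun k b' m hb' hbΓ => hgap _ <| sum_natCast_mul_mem_closure fun i _ =>
    ⟨let ⟨_, hb, hbi⟩ := hbΓ i; mem_biUnion hb hbi, (hb' i).1⟩⟩
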